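/- Let E be a real Hilbert space, G ⊆ E a closed subspace with orthogonal complement G^⊥, and Ψ: E → ℝ a Fréchet C^1 functional such that: (a) Ψ′ is globally Lipschitz on E; (b) there is ω > 0 with ⟨Ψ′(u) − Ψ′(v), u − v⟩ ≥ (ω/2)‖u − v‖² whenever u − v ∈ G^⊥; (c) h: G → G^⊥ satisfies ⟨Ψ′(g + h(g)), h′⟩ = 0 for all g ∈ G and h′ ∈ G^⊥; and (d) every sequence (g_j) in G with Ψ′(g_j + h(g_j)) → 0 has a convergent subsequence. Then every sequence (x_j) in E with Ψ′(x_j) → 0 as j → ∞ has a convergent subsequence; that is, Ψ satisfies the Palais–Smale condition. -/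

import Mathlib

open Filter Topology

/-- Proposition 2.12 (core): the Palais–Smale condition for `Ψ` follows from
the Palais–Smale condition of its finite-dimensional reduction, the uniform
convexity of `Ψ` in the `G^⊥`-directions, and the Lipschitz continuity of its
gradient. -/
theorem palais_smale_from_reduction
    (E : Type*) [NormedAddCommGroup E] [InnerProductSpace ℝ E] [CompleteSpace E]
    (G : Submodule ℝ E) (hG : IsClosed (G : Set E))
    (Ψ : E → ℝ) (hΨ : ContDiff ℝ 1 Ψ)
    (hLip : ∃ L : NNReal, LipschitzWith L (fun u => fderiv ℝ Ψ u))
    (ω : ℝ) (hω : 0 < ω)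
    (hconv : ∀ u v : E, u - v ∈ Gᗮ →
      (ω / 2) * ‖u - v‖ ^ 2 ≤ fderiv ℝ Ψ u (u - v) - fderiv ℝ Ψ v (u - v))
    (h : E → E)
    (hmem : ∀ g ∈ G, h g ∈ Gᗮ)
    (hcrit : ∀ g ∈ G, ∀ h' ∈ Gᗮ, fderiv ℝ Ψ (g + h g) h' = 0)
    (hPSred : ∀ g : ℕ → E, (∀ j, g j ∈ G) →
      Tendsto (fun j => fderiv ℝ Ψ (g j + h (g j))) atTop (𝓝 0) →
      ∃ σ : ℕ → ℕ, StrictMono σ ∧ ∃ x : E, Tendsto (g ∘ σ) atTop (𝓝 x)) :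
    ∀ x : ℕ → E, Tendsto (fun j => fderiv ℝ Ψ (x j)) atTop (𝓝 0) →
      ∃ σ : ℕ → ℕ, StrictMono σ ∧ ∃ l : E, Tendsto (x ∘ σ) atTop (𝓝 l) := by
  intro x hx
  obtain ⟨L, hL⟩ := hLip
  haveI : CompleteSpace G := hG.completeSpace_coe
  have key : ∀ (u g : E) (A : E →L[ℝ] ℝ), g ∈ G → u - g ∈ Gᗮ → (∀ w ∈ Gᗮ, A w = 0) →
      ‖u - (g + h g)‖ ≤ (2 / ω) * ‖fderiv ℝ Ψ u - A‖ := by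
    intro u g A hg hu hA
    have hd : u - (g + h g) ∈ Gᗮ := by
      have := Gᗮ.sub_mem hu (hmem g hg)
      rwa [sub_sub] at this
    have h1 := hconv u (g + h g) hd
    rw [hcrit g hg _ hd] at h1
    have h2 := (le_abs_self _).trans ((fderiv ℝ Ψ u - A).le_opNorm (u - (g + h g)))
    rw [ContinuousLinearMap.sub_apply, hA _ hd] at h2
    have h3 : (ω / 2) * ‖u - (g + h g)‖ ≤ ‖fderiv ℝ Ψ u - A‖ := by
      rcases (norm_nonneg (u - (g + h g))).eq_or_lt with h0 | h0
      · rw [← h0]; simp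
      · refine le_of_mul_le_mul_right ?_ h0
        nlinarith
    calc ‖u - (g + h g)‖ = (2 / ω) * ((ω / 2) * ‖u - (g + h g)‖) := by field_simp
      _ ≤ _ := by gcongr
  let g : ℕ → E := fun j => G.starProjection (x j)
  have hg : ∀ j, g j ∈ G := fun j => G.starProjection_apply_mem (x j)
  have hxg : ∀ j, x j - g j ∈ Gᗮ := fun j => G.sub_starProjection_mem_orthogonal (x j)
  have hxy : Tendsto (fun j => x j - (g j + h (g j))) atTop (𝓝 0) := by
    refine squeeze_zero_norm (a := fun j => (2 / ω) * ‖fderiv ℝ Ψ (x j)‖) (fun j => ?_) ?_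
    · simpa using key (x j) (g j) 0 (hg j) (hxg j) (by simp)
    · simpa using (hx.norm.const_mul (2 / ω))
  have hy : Tendsto (fun j => fderiv ℝ Ψ (g j + h (g j))) atTop (𝓝 0) := by
    have h1 : Tendsto (fun j => fderiv ℝ Ψ (x j) - fderiv ℝ Ψ (g j + h (g j))) atTop (𝓝 0) := by
      refine squeeze_zero_norm (a := fun j => L * ‖x j - (g j + h (g j))‖)
        (fun j => hL.norm_sub_le _ _) ?_
      simpa using (hxy.norm.const_mul (L : ℝ))
    simpa using hx.sub h1
  obtain ⟨σ, hσ, l, hl⟩ := hPSred g hg hy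
  have hlG : l ∈ G := hG.mem_of_tendsto hl (Eventually.of_forall fun j => hg (σ j))
  have hgl : Tendsto (fun j => g (σ j) - l) atTop (𝓝 0) := by
    simpa using hl.sub_const l
  have hh : Tendsto (fun j => h l - h (g (σ j))) atTop (𝓝 0) := by
    refine squeeze_zero_norm (a := fun j => (2 / ω) * (L * ‖g (σ j) - l‖)) (fun j => ?_) ?_
    · have h1 := key (g (σ j) + h l) (g (σ j)) (fderiv ℝ Ψ (l + h l)) (hg _)
        (by simpa using hmem l hlG) (hcrit l hlG)
      have h2 := hL.norm_sub_le (g (σ j) + h l) (l + h l)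
      rw [add_sub_add_left_eq_sub] at h1
      rw [add_sub_add_right_eq_sub] at h2
      exact h1.trans (by gcongr)
    · simpa using ((hgl.norm.const_mul (L : ℝ)).const_mul (2 / ω))
  refine ⟨σ, hσ, l + h l, ?_⟩
  have h5 := ((hxy.comp hσ.tendsto_atTop).add hgl).sub hh
  have h6 := h5.add_const (l + h l)
  simp only [add_zero, sub_zero, zero_add] at h6
  refine h6.congr fun j => ?_
  simp only [Function.comp]
  abel
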